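/- Let p and q be positive integers. Then S_ann-nc(p,q) is the smallest subset of S([p+q]) which contains S_disc-nc(p+q) and is invariant under conjugation with γ_ext and with γ_int. -/

import Mathlib

/-- The permutation induced by `f` on the subset `B`: an element `b` is sent to the first
element of the sequence `f b, f (f b), f (f (f b)), ...` that lies in `B`
(and is left fixed if no iterate ever returns to `B`). -/
noncomputable def induced {α : Type*} (f : α → α) (B : Set α) (b : α) : α := by
  classical
  exact if h : ∃ k, 0 < k ∧ f^[k] b ∈ B then f^[Nat.find h] b else b

/-- `A` is an orbit of the permutation `τ`. -/
def IsOrbit {α : Type*} (τ : Equiv.Perm α) (A : Set α) : Prop :=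
  ∃ a, A = {b | τ.SameCycle a b}

/-- The number of orbits of `τ` (fixed points count as orbits). -/
noncomputable def numOrbits {α : Type*} (τ : Equiv.Perm α) : ℕ :=
  Set.ncard {A : Set α | IsOrbit τ A}

/-- `induced f S` acts on `a, b, c` as the 3-cycle `(a, b, c)`. -/
def MapsCyc3 {α : Type*} (f : α → α) (S : Set α) (a b c : α) : Prop :=
  induced f S a = b ∧ induced f S b = c ∧ induced f S c = a

/-- `induced f S` acts on `a, b, c, d` as the 4-cycle `(a, b, c, d)`. -/
def MapsCyc4 {α : Type*} (f : α → α) (S : Set α) (a b c d : α) : Prop :=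
  induced f S a = b ∧ induced f S b = c ∧ induced f S c = d ∧ induced f S d = a

/-- `induced f S` acts on `a, b, c, d` as the product of transpositions `(a, c)(b, d)`. -/
def MapsSwap2 {α : Type*} (f : α → α) (S : Set α) (a b c d : α) : Prop :=
  induced f S a = c ∧ induced f S c = a ∧ induced f S b = d ∧ induced f S d = b

/-- `induced f S` acts on `x, y` as the transposition `(x, y)`. -/
def MapsSwap {α : Type*} (f : α → α) (S : Set α) (x y : α) : Prop :=
  induced f S x = y ∧ induced f S y = x

/-- `σ` is standard with respect to the "forward cycle" `γ₀`, i.e. `σ∣B = γ₀∣B` for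
every orbit `B` of `σ`. -/
def DiscStandardRel {n : ℕ} (γ₀ σ : Equiv.Perm (Fin n)) : Prop :=
  ∀ A : Set (Fin n), IsOrbit σ A → ∀ b ∈ A, induced (⇑σ) A b = induced (⇑γ₀) A b

/-- The orbit partition of `σ` has no crossing: there are no `a < b < c < d` with
`a, c` in one orbit and `b, d` in a different orbit. -/
def OrbitsNoCrossing {n : ℕ} (σ : Equiv.Perm (Fin n)) : Prop :=
  ¬ ∃ a b c d : Fin n, a < b ∧ b < c ∧ c < d ∧
      σ.SameCycle a c ∧ σ.SameCycle b d ∧ ¬ σ.SameCycle a b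

/-- Disc non-crossing relative to a given forward cycle `γ₀`. -/
def DiscNCRel {n : ℕ} (γ₀ σ : Equiv.Perm (Fin n)) : Prop :=
  DiscStandardRel γ₀ σ ∧ OrbitsNoCrossing σ

/-- The set `S_disc-nc(n)` of disc non-crossing permutations of `[n]`
(here `[n] = {1, …, n}` is modelled by `Fin n`, and the forward cycle
`γ₀ = (1, 2, …, n)` is `finRotate n`). -/
def DiscNC {n : ℕ} (σ : Equiv.Perm (Fin n)) : Prop :=
  DiscNCRel (finRotate n) σ

/-- The external points `{1, …, p}` (0-indexed: values `< p`). -/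
def extSet (p q : ℕ) : Set (Fin (p + q)) := {i | (i : ℕ) < p}

/-- The internal points `{p+1, …, p+q}` (0-indexed: values `≥ p`). -/
def intSet (p q : ℕ) : Set (Fin (p + q)) := {i | p ≤ (i : ℕ)}

/-- `γ_ext = (1, 2, …, p)`, the forward cycle on the external points. -/
def gammaExt (p q : ℕ) : Equiv.Perm (Fin (p + q)) :=
  ((List.finRange (p + q)).take p).formPerm

/-- `γ_int = (p+1, p+2, …, p+q)`, the forward cycle on the internal points. -/
def gammaInt (p q : ℕ) : Equiv.Perm (Fin (p + q)) :=
  ((List.finRange (p + q)).drop p).formPerm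

/-- `γ = γ_ext · γ_int`. -/
def gammaAnn (p q : ℕ) : Equiv.Perm (Fin (p + q)) := gammaExt p q * gammaInt p q

/-- `λ_{x,y}`: the permutation fixing `x` and `y` and cycling the remaining points as
`(γ_ext(x), γ_ext²(x), …, γ_ext^{p-1}(x), γ_int(y), γ_int²(y), …, γ_int^{q-1}(y))`. -/
def lamPerm (p q : ℕ) (x y : Fin (p + q)) : Equiv.Perm (Fin (p + q)) :=
  (((List.range (p - 1)).map fun k => (gammaExt p q ^ (k + 1)) x) ++
    ((List.range (q - 1)).map fun k => (gammaInt p q ^ (k + 1)) y)).formPerm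

/-- `τ` is standard in `(p,q)`-annular sense. -/
def AnnStandard (p q : ℕ) (τ : Equiv.Perm (Fin (p + q))) : Prop :=
  (∀ A : Set (Fin (p + q)), IsOrbit τ A →
    (∀ b ∈ A ∩ extSet p q,
        induced (⇑τ) (A ∩ extSet p q) b = induced (⇑(gammaExt p q)) (A ∩ extSet p q) b) ∧
    (∀ b ∈ A ∩ intSet p q,
        induced (⇑τ) (A ∩ intSet p q) b = induced (⇑(gammaInt p q)) (A ∩ intSet p q) b)) ∧
  (∀ A : Set (Fin (p + q)), IsOrbit τ A →
    (A ∩ extSet p q).Nonempty → (A ∩ intSet p q).Nonempty →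
    (∃! a, a ∈ A ∩ extSet p q ∧ τ a ∈ intSet p q) ∧
    (∃! a, a ∈ A ∩ intSet p q ∧ τ a ∈ extSet p q))

/-- The annular crossing pattern (AC-1). -/
def AC1 (p q : ℕ) (τ : Equiv.Perm (Fin (p + q))) : Prop :=
  ∃ a b c d : Fin (p + q), List.Pairwise (· ≠ ·) [a, b, c, d] ∧
    MapsCyc4 (⇑(gammaAnn p q)) {a, b, c, d} a b c d ∧
    MapsSwap2 (⇑τ) {a, b, c, d} a b c d

/-- The annular crossing pattern (AC-2). -/
def AC2 (p q : ℕ) (τ : Equiv.Perm (Fin (p + q))) : Prop :=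
  ∃ a b c x y : Fin (p + q), List.Pairwise (· ≠ ·) [a, b, c, x, y] ∧
    x ∈ extSet p q ∧ y ∈ intSet p q ∧
    MapsCyc3 (⇑(lamPerm p q x y)) {a, b, c} a b c ∧
    MapsCyc3 (⇑τ) {a, b, c, x, y} a c b ∧
    MapsSwap (⇑τ) {a, b, c, x, y} x y

/-- The annular crossing pattern (AC-3). -/
def AC3 (p q : ℕ) (τ : Equiv.Perm (Fin (p + q))) : Prop :=
  ∃ a b c d x y : Fin (p + q), List.Pairwise (· ≠ ·) [a, b, c, d, x, y] ∧
    x ∈ extSet p q ∧ y ∈ intSet p q ∧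
    MapsCyc4 (⇑(lamPerm p q x y)) {a, b, c, d} a b c d ∧
    MapsSwap2 (⇑τ) {a, b, c, d, x, y} a b c d ∧
    MapsSwap (⇑τ) {a, b, c, d, x, y} x y

/-- The set `S_ann-nc(p,q)` of `(p,q)`-annular non-crossing permutations. -/
def AnnNC (p q : ℕ) (τ : Equiv.Perm (Fin (p + q))) : Prop :=
  AnnStandard p q τ ∧ ¬ AC1 p q τ ∧ ¬ AC2 p q τ ∧ ¬ AC3 p q τ

/-- A `(p,q)`-connecting set: meets both the external and internal points. -/
def ConnectingBlock (p q : ℕ) (B : Set (Fin (p + q))) : Prop :=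
  (B ∩ extSet p q).Nonempty ∧ (B ∩ intSet p q).Nonempty

/-- `τ` is `(p,q)`-connected: it has a `(p,q)`-connecting orbit. -/
def AnnConnected (p q : ℕ) (τ : Equiv.Perm (Fin (p + q))) : Prop :=
  ∃ A : Set (Fin (p + q)), IsOrbit τ A ∧ ConnectingBlock p q A

/-- A family of blocks has no crossing: no `a < b < c < d` with `a, c` in one block and
`b, d` in a different block. -/
def NoCrossing {n : ℕ} (ρ : Set (Set (Fin n))) : Prop :=
  ¬ ∃ (a b c d : Fin n) (B C : Set (Fin n)), B ∈ ρ ∧ C ∈ ρ ∧ B ≠ C ∧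
      a < b ∧ b < c ∧ c < d ∧ a ∈ B ∧ c ∈ B ∧ b ∈ C ∧ d ∈ C

/-!
Conjugation by `γ_ext` and `γ_int` rotates the two circles of the annulus, and `λ_{x,y}` rotates
along with `x` and `y`; so `S_ann-nc(p,q)` is invariant, and it contains `S_disc-nc(p+q)` because in
a disc non-crossing permutation an orbit through `x` and `y` confines every other orbit to one of
the two arcs between them, on which `λ_{x,y}` and the forward cycle agree.

Conversely let `τ` be annular non-crossing. If no orbit passes from the external to the internal
circle, then `τ` is already disc non-crossing. Otherwise `τ e` is internal for some external `e`,
and a rotation brings `e` and `τ e` to the adjacent points `p` and `p + 1`. Cutting the annulus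
along this step makes it a disc: `λ_{p,p+1}` is then the forward cycle on the remaining points, so
that (AC-2) forces the orbits avoiding the cut to be standard and (AC-3) forbids crossings between
them. The orbit containing the cut is standard because it changes circles only once each way, and
(AC-1) or (AC-2) excludes its crossings with other orbits.
-/

open Equiv

attribute [local instance] LinearOrder.toCircularOrder

theorem conj_pow_mem {G : Type*} [Group G] {S : Set G} {g : G}
    (hS : ∀ a ∈ S, g * a * g⁻¹ ∈ S) (k : ℕ) {a : G} (ha : a ∈ S) :
    g ^ k * a * (g ^ k)⁻¹ ∈ S := by
  induction k with
  | zero => simpa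
  | succ k ih => simpa only [pow_succ', mul_inv_rev, mul_assoc] using hS _ ih

section Induced

variable {α : Type*} {S : Set α} {u v w : α}

theorem induced_eq_iterate {f : α → α} {k : ℕ} (hk : 0 < k) (hmem : f^[k] u ∈ S)
    (hmin : ∀ j, 0 < j → j < k → f^[j] u ∉ S) : induced f S u = f^[k] u := by
  classical
  have hex : ∃ k, 0 < k ∧ f^[k] u ∈ S := ⟨k, hk, hmem⟩
  have hfind : Nat.find hex = k :=
    (Nat.find_eq_iff hex).2 ⟨⟨hk, hmem⟩, fun j hj h => hmin j h.1 hj h.2⟩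
  rw [induced, dif_pos hex, hfind]

theorem induced_eq_apply {f : α → α} (h : f u ∈ S) : induced f S u = f u :=
  induced_eq_iterate (k := 1) one_pos h (by omega)

theorem exists_induced_eq_iterate [Finite α] (f : Perm α) (hu : u ∈ S) :
    ∃ k, 0 < k ∧ induced f S u = f^[k] u ∧ f^[k] u ∈ S ∧ ∀ j, 0 < j → j < k → f^[j] u ∉ S := by
  classical
  have hex : ∃ k, 0 < k ∧ f^[k] u ∈ S :=
    ⟨orderOf f, orderOf_pos f, by rwa [Perm.iterate_eq_pow, pow_orderOf_eq_one]⟩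
  refine ⟨Nat.find hex, (Nat.find_spec hex).1, ?_, (Nat.find_spec hex).2,
    fun j hj hlt hmem => Nat.find_min hex hlt ⟨hj, hmem⟩⟩
  rw [induced, dif_pos hex]

theorem induced_mem [Finite α] (f : Perm α) (hu : u ∈ S) : induced f S u ∈ S := by
  obtain ⟨k, -, heq, hmem, -⟩ := exists_induced_eq_iterate f hu
  exact heq ▸ hmem

theorem sameCycle_iterate (f : Perm α) (u : α) (k : ℕ) : f.SameCycle u (f^[k] u) := by
  rw [Perm.iterate_eq_pow]
  exact Perm.sameCycle_pow_right.2 .rfl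

-- Equality in a quotient is what congruence closure can chain, unlike `SameCycle`.
theorem sameCycle_iff_mk_eq {f : Perm α} :
    f.SameCycle u v ↔ (⟦u⟧ : Quotient (Perm.SameCycle.setoid f)) = ⟦v⟧ :=
  (Quotient.eq (r := Perm.SameCycle.setoid f)).symm

theorem sameCycle_induced [Finite α] (f : Perm α) (hu : u ∈ S) :
    f.SameCycle u (induced f S u) := by
  obtain ⟨k, -, heq, -, -⟩ := exists_induced_eq_iterate f hu
  exact heq ▸ sameCycle_iterate f u k

theorem mem_of_sameCycle_of_induced_mem [Finite α] {f : Perm α} {T : Set α} (hTS : T ⊆ S)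
    (hT : ∀ v ∈ T, induced f S v ∈ T) (hu : u ∈ T) (hw : w ∈ S) (h : f.SameCycle u w) :
    w ∈ T := by
  obtain ⟨k, hk⟩ := h.exists_nat_pow_eq
  induction k using Nat.strong_induction_on generalizing u with
  | _ k ih =>
    obtain ⟨m, hm, heq, -, hmin⟩ := exists_induced_eq_iterate f (hTS hu)
    rcases Nat.eq_zero_or_pos k with rfl | hkpos
    · exact hk ▸ hu
    have hmk : m ≤ k := by
      by_contra! hlt
      exact hmin k hkpos hlt (by rwa [Perm.iterate_eq_pow, hk])
    refine ih (k - m) (by omega) (heq ▸ hT u hu)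
      ((sameCycle_iterate f u m).symm.trans h) ?_
    rw [Perm.iterate_eq_pow, ← Perm.mul_apply, ← pow_add, Nat.sub_add_cancel hmk, hk]

theorem induced_conj (f g : Perm α) (S : Set α) (u : α) :
    induced (g * f * g⁻¹) (g '' S) (g u) = g (induced f S u) := by
  classical
  have hiter (k : ℕ) : (g * f * g⁻¹)^[k] (g u) = g (f^[k] u) :=
    (Function.Semiconj.iterate_right (f := g) (ga := f) (gb := g * f * g⁻¹)
      (fun v => by simp) k u).symm
  have hreturn (k : ℕ) :
      0 < k ∧ (g * f * g⁻¹)^[k] (g u) ∈ g '' S ↔ 0 < k ∧ f^[k] u ∈ S := by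
    rw [hiter, g.injective.mem_set_image]
  unfold induced
  split_ifs with hconj hf hf
  · rw [hiter, Nat.find_congr' (hq := hf) fun {k} => hreturn k]
  · exact absurd ((exists_congr hreturn).1 hconj) hf
  · exact absurd ((exists_congr hreturn).2 hf) hconj
  · rfl

theorem exists_mem_apply_notMem [Finite α] {f : Perm α} {D : Set α} (hu : u ∈ D) (hv : v ∉ D)
    (h : f.SameCycle u v) : ∃ a, f.SameCycle u a ∧ a ∈ D ∧ f a ∉ D := by
  by_contra! hstay
  refine hv (mem_of_sameCycle_of_induced_mem (S := Set.univ) (T := {w | f.SameCycle u w ∧ w ∈ D})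
    (Set.subset_univ _) (fun w hw => ?_) ⟨.rfl, hu⟩ trivial h).2
  rw [induced_eq_apply (Set.mem_univ _)]
  exact ⟨hw.1.trans (sameCycle_iterate f w 1), hstay w hw.1 hw.2⟩

theorem exists_notMem_apply_eq_induced [Finite α] {f : Perm α} {D : Set α} (hu : u ∈ D)
    (hfu : f u ∉ D) :
    ∃ c ∉ D, f.SameCycle u c ∧ f c = induced f ({w | f.SameCycle u w} ∩ D) u := by
  obtain ⟨k, hk, heq, hmem, hmin⟩ :=
    exists_induced_eq_iterate f (S := {w | f.SameCycle u w} ∩ D) ⟨.rfl, hu⟩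
  have hk_ne : k ≠ 1 := by
    rintro rfl
    exact hfu hmem.2
  refine ⟨f^[k - 1] u, fun hc => hmin (k - 1) (by omega) (by omega) ⟨sameCycle_iterate f u _, hc⟩,
    sameCycle_iterate f u _, ?_⟩
  rw [heq, ← Function.iterate_succ_apply' f, Nat.succ_eq_add_one, Nat.sub_add_cancel hk]

end Induced

section CyclicOrder

variable {α β : Type*} [LinearOrder β] {pos : α → β} {S D : Set α} {f : Perm α} {u v w : α}

theorem sbtw_iff_lt {a b c : β} :
    sbtw a b c ↔ a < b ∧ b < c ∨ b < c ∧ c < a ∨ c < a ∧ a < b := Iff.rfl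

/-- Going around the circle from `u`, the first point of `S` that is met is `v`. Points are placed
on the circle by `pos`; when `v = u` this says that `S` has no point besides `u`. -/
def IsCyclicNext (pos : α → β) (S : Set α) (u v : α) : Prop :=
  v ∈ S ∧ ∀ w ∈ S, pos w = pos u ∨ pos w = pos v ∨ sbtw (pos u) (pos v) (pos w)

/-- On `D`, the map `f` is the cycle that visits the points in the cyclic order given by `pos`. -/
structure IsCyclicOn (f : α → α) (pos : α → β) (D : Set α) : Prop where
  injOn : Set.InjOn pos D
  next : ∀ u ∈ D, IsCyclicNext pos D u (f u)

theorem IsCyclicNext.mono {T : Set α} (h : IsCyclicNext pos S u v) (hTS : T ⊆ S) (hv : v ∈ T) :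
    IsCyclicNext pos T u v :=
  ⟨hv, fun w hw => h.2 w (hTS hw)⟩

theorem IsCyclicOn.congr {f g : α → α} (H : IsCyclicOn f pos D) (hfg : Set.EqOn f g D) :
    IsCyclicOn g pos D :=
  ⟨H.injOn, fun u hu => hfg hu ▸ H.next u hu⟩

theorem IsCyclicNext.pos_eq {v' : α} (h : IsCyclicNext pos S u v) (h' : IsCyclicNext pos S u v') :
    pos v = pos v' := by
  have hv := h.2 v' h'.1
  have hv' := h'.2 v h.1
  simp only [sbtw_iff_lt] at hv hv'
  grind

theorem IsCyclicOn.isCyclicNext_induced [Finite α] (H : IsCyclicOn f pos D) (hD : u ∈ D)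
    (hS : u ∈ S) : IsCyclicNext pos (S ∩ D) u (induced f S u) := by
  obtain ⟨k, hk, heq, hmem, hmin⟩ := exists_induced_eq_iterate f hS
  rw [heq]
  clear hS heq
  induction k generalizing u with
  | zero => omega
  | succ k ih =>
    have hnext := H.next u hD
    rcases Nat.eq_zero_or_pos k with rfl | hkpos
    · exact hnext.mono Set.inter_subset_right ⟨hmem, hnext.1⟩
    have hout : f u ∉ S := hmin 1 one_pos (by omega)
    have htail := ih hnext.1 hkpos hmem fun j hj hjk => hmin (j + 1) (by omega) (by omega)
    refine ⟨htail.1, fun w hw => ?_⟩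
    have hne : pos w ≠ pos (f u) := fun h => hout (H.injOn hw.2 hnext.1 h ▸ hw.1)
    rcases hnext.2 w hw.2 with h | h | h
    · exact .inl h
    · exact absurd h hne
    rcases htail.2 w hw with h' | h' | h'
    · exact absurd h' hne
    · exact .inr (.inl h')
    · exact .inr (.inr (sbtw_trans_left h h'))

theorem IsCyclicOn.induced_eq_iff [Finite α] (H : IsCyclicOn f pos D) (hD : u ∈ D) (hS : u ∈ S) :
    induced f S u = v ↔ IsCyclicNext pos (S ∩ D) u v := by
  have hnext := H.isCyclicNext_induced hD hS
  refine ⟨fun h => h ▸ hnext, fun h => ?_⟩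
  exact H.injOn hnext.1.2 h.1.2 (hnext.pos_eq h)

theorem IsCyclicOn.mapsCyc3_iff [Finite α] (H : IsCyclicOn f pos D) {a b c : α} (ha : a ∈ D)
    (hb : b ∈ D) (hc : c ∈ D) (hab : a ≠ b) (hbc : b ≠ c) (hca : c ≠ a) :
    MapsCyc3 f {a, b, c} a b c ↔ sbtw (pos a) (pos b) (pos c) := by
  have hab' := H.injOn.ne ha hb hab
  have hbc' := H.injOn.ne hb hc hbc
  have hca' := H.injOn.ne hc ha hca
  have hsub : ({a, b, c} : Set α) ∩ D = {a, b, c} := Set.inter_eq_left.2 (by grind)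
  simp only [MapsCyc3, H.induced_eq_iff ha (S := {a, b, c}) (by simp),
    H.induced_eq_iff hb (S := {a, b, c}) (by simp),
    H.induced_eq_iff hc (S := {a, b, c}) (by simp), hsub]
  simp only [IsCyclicNext, Set.mem_insert_iff, Set.mem_singleton_iff, forall_eq_or_imp, forall_eq,
    sbtw_iff_lt]
  grind

theorem IsCyclicOn.mapsCyc4_iff [Finite α] (H : IsCyclicOn f pos D) {a b c d : α} (ha : a ∈ D)
    (hb : b ∈ D) (hc : c ∈ D) (hd : d ∈ D) (hne : [a, b, c, d].Pairwise (· ≠ ·)) :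
    MapsCyc4 f {a, b, c, d} a b c d ↔
      sbtw (pos a) (pos b) (pos c) ∧ sbtw (pos a) (pos c) (pos d) := by
  have hinj : ∀ u ∈ D, ∀ v ∈ D, u ≠ v → pos u ≠ pos v := fun u hu v hv => H.injOn.ne hu hv
  have hsub : ({a, b, c, d} : Set α) ∩ D = {a, b, c, d} := Set.inter_eq_left.2 (by grind)
  simp only [MapsCyc4, H.induced_eq_iff ha (S := {a, b, c, d}) (by simp),
    H.induced_eq_iff hb (S := {a, b, c, d}) (by simp),
    H.induced_eq_iff hc (S := {a, b, c, d}) (by simp),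
    H.induced_eq_iff hd (S := {a, b, c, d}) (by simp), hsub]
  simp only [List.pairwise_cons, List.mem_cons, List.not_mem_nil, or_false] at hne
  simp only [IsCyclicNext, Set.mem_insert_iff, Set.mem_singleton_iff, forall_eq_or_imp, forall_eq,
    sbtw_iff_lt]
  grind

theorem isCyclicOn_formPerm [DecidableEq α] {l : List α} (h : l.Pairwise (pos · < pos ·))
    (hD : ∀ u, u ∈ l ↔ u ∈ D) : IsCyclicOn l.formPerm pos D := by
  have hlt : ∀ i (hi : i < l.length) j (hj : j < l.length), i < j → pos l[i] < pos l[j] :=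
    fun i hi j hj hij => List.pairwise_iff_getElem.1 h i j hi hj hij
  have hnodup : l.Nodup := h.imp fun hpos heq => hpos.ne (congrArg pos heq)
  refine ⟨fun u hu v hv huv => ?_, fun u hu =>
    ⟨(hD _).1 (List.formPerm_apply_mem_of_mem ((hD u).2 hu)), fun w hw => ?_⟩⟩
  · obtain ⟨i, hi, rfl⟩ := List.getElem_of_mem ((hD u).2 hu)
    obtain ⟨j, hj, rfl⟩ := List.getElem_of_mem ((hD v).2 hv)
    grind
  · obtain ⟨i, hi, rfl⟩ := List.getElem_of_mem ((hD u).2 hu)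
    obtain ⟨j, hj, rfl⟩ := List.getElem_of_mem ((hD w).2 hw)
    rw [List.formPerm_apply_getElem l hnodup i hi, sbtw_iff_lt]
    rcases Nat.lt_or_ge (i + 1) l.length with hi' | hi'
    · simp only [Nat.mod_eq_of_lt hi']
      grind
    · have : (i + 1) % l.length = 0 := by rw [show i + 1 = l.length by omega, Nat.mod_self]
      simp only [this]
      grind

end CyclicOrder

section Cycles

variable {p q k : ℕ} {x y u v : Fin (p + q)}

theorem mem_extSet : u ∈ extSet p q ↔ (u : ℕ) < p := Iff.rfl

theorem mem_intSet : u ∈ intSet p q ↔ p ≤ (u : ℕ) := Iff.rfl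

theorem notMem_extSet : u ∉ extSet p q ↔ u ∈ intSet p q := by
  rw [mem_extSet, mem_intSet, not_lt]

theorem notMem_intSet : u ∉ intSet p q ↔ u ∈ extSet p q := by
  rw [mem_extSet, mem_intSet, not_le]

theorem compl_extSet (p q : ℕ) : (extSet p q)ᶜ = intSet p q := Set.ext fun _ => notMem_extSet

theorem compl_intSet (p q : ℕ) : (intSet p q)ᶜ = extSet p q := Set.ext fun _ => notMem_intSet

theorem mem_take_finRange : u ∈ (List.finRange (p + q)).take p ↔ u ∈ extSet p q := by
  simp only [List.mem_take_iff_getElem, mem_extSet]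
  exact ⟨by rintro ⟨i, hi, rfl⟩; simp at hi ⊢; omega, fun h => ⟨u, by simp; omega, by simp⟩⟩

theorem mem_drop_finRange : u ∈ (List.finRange (p + q)).drop p ↔ u ∈ intSet p q := by
  simp only [List.mem_drop_iff_getElem, mem_intSet]
  exact ⟨by rintro ⟨i, hi, rfl⟩; simp,
    fun h => ⟨u - p, by simp; omega, by simp [Nat.add_sub_of_le h]⟩⟩

theorem gammaExt_apply_of_mem_intSet (hu : u ∈ intSet p q) : gammaExt p q u = u :=
  List.formPerm_apply_of_notMem fun h => notMem_extSet.2 hu (mem_take_finRange.1 h)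

theorem gammaInt_apply_of_mem_extSet (hu : u ∈ extSet p q) : gammaInt p q u = u :=
  List.formPerm_apply_of_notMem fun h => notMem_intSet.2 hu (mem_drop_finRange.1 h)

theorem isCyclicOn_gammaExt (p q : ℕ) : IsCyclicOn (gammaExt p q) Fin.val (extSet p q) :=
  isCyclicOn_formPerm ((List.pairwise_lt_finRange (p + q)).sublist (List.take_sublist p _))
    fun _ => mem_take_finRange

theorem isCyclicOn_gammaInt (p q : ℕ) : IsCyclicOn (gammaInt p q) Fin.val (intSet p q) :=
  isCyclicOn_formPerm ((List.pairwise_lt_finRange (p + q)).sublist (List.drop_sublist p _))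
    fun _ => mem_drop_finRange

theorem gammaAnn_apply_of_mem_extSet (hu : u ∈ extSet p q) : gammaAnn p q u = gammaExt p q u := by
  rw [gammaAnn, Perm.mul_apply, gammaInt_apply_of_mem_extSet hu]

theorem gammaAnn_apply_of_mem_intSet (hu : u ∈ intSet p q) : gammaAnn p q u = gammaInt p q u := by
  rw [gammaAnn, Perm.mul_apply,
    gammaExt_apply_of_mem_intSet ((isCyclicOn_gammaInt p q).next u hu).1]

theorem isCyclicOn_gammaAnn_extSet (p q : ℕ) : IsCyclicOn (gammaAnn p q) Fin.val (extSet p q) :=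
  (isCyclicOn_gammaExt p q).congr fun _ hu => (gammaAnn_apply_of_mem_extSet hu).symm

theorem isCyclicOn_gammaAnn_intSet (p q : ℕ) : IsCyclicOn (gammaAnn p q) Fin.val (intSet p q) :=
  (isCyclicOn_gammaInt p q).congr fun _ hu => (gammaAnn_apply_of_mem_intSet hu).symm

theorem isCyclicOn_finRotate (n : ℕ) : IsCyclicOn (finRotate n) Fin.val Set.univ := by
  refine ⟨Fin.val_injective.injOn, fun u _ => ⟨trivial, fun w _ => ?_⟩⟩
  have : NeZero n := ⟨by rintro rfl; exact u.elim0⟩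
  obtain ⟨m, rfl⟩ := Nat.exists_eq_succ_of_ne_zero (NeZero.ne n)
  rw [coe_finRotate, sbtw_iff_lt]
  have := u.val_lt_last
  grind

theorem val_gammaExt_pow_apply (hx : x ∈ extSet p q) (hk : k ≤ p) :
    ((gammaExt p q ^ k) x : ℕ) = if x + k < p then x + k else x + k - p := by
  have hxp := mem_extSet.1 hx
  have hlen : ((List.finRange (p + q)).take p).length = p := by simp
  have hpow := List.formPerm_pow_apply_getElem ((List.finRange (p + q)).take p)
    ((List.nodup_finRange _).sublist (List.take_sublist p _)) k x (by omega)
  simp only [List.getElem_take, List.getElem_finRange, Fin.cast_mk, Fin.eta, hlen] at hpow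
  rw [gammaExt, hpow]
  split_ifs with h
  · exact Nat.mod_eq_of_lt h
  · exact (Nat.mod_eq_sub_mod (by omega)).trans (Nat.mod_eq_of_lt (by omega))

theorem val_gammaInt_pow_apply (hy : y ∈ intSet p q) (hk : k ≤ q) :
    ((gammaInt p q ^ k) y : ℕ) = if y + k < p + q then y + k else y + k - q := by
  have hyp := mem_intSet.1 hy
  have hlen : ((List.finRange (p + q)).drop p).length = q := by simp
  have hpow := List.formPerm_pow_apply_getElem ((List.finRange (p + q)).drop p)
    ((List.nodup_finRange _).sublist (List.drop_sublist p _)) k (y - p) (by omega)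
  simp only [List.getElem_drop, List.getElem_finRange, Fin.cast_mk, Nat.add_sub_of_le hyp, Fin.eta,
    hlen] at hpow
  rw [gammaInt, hpow]
  have hmod : (y - p + k) % q = if y + k < p + q then y - p + k else y - p + k - q := by
    split_ifs with h
    · exact Nat.mod_eq_of_lt (by omega)
    · exact (Nat.mod_eq_sub_mod (by omega)).trans (Nat.mod_eq_of_lt (by omega))
  grind

theorem exists_gammaExt_pow_apply_eq (hx : x ∈ extSet p q) (hu : u ∈ extSet p q) :
    ∃ k ≤ p, (gammaExt p q ^ k) x = u := by
  rw [mem_extSet] at hx hu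
  refine ⟨if x ≤ u then u - x else u + p - x, by grind, Fin.ext ?_⟩
  rw [val_gammaExt_pow_apply hx (by grind)]
  grind

theorem exists_gammaInt_pow_apply_eq (hy : y ∈ intSet p q) (hu : u ∈ intSet p q) :
    ∃ k ≤ q, (gammaInt p q ^ k) y = u := by
  rw [mem_intSet] at hy hu
  refine ⟨if y ≤ u then u - y else u + q - y, by grind, Fin.ext ?_⟩
  rw [val_gammaInt_pow_apply hy (by grind)]
  grind

/-- The place of the point `u` in the cycle `λ_{x,y}`, which reads
`x + 1, …, p - 1, 0, …, x - 1, y + 1, …, p + q - 1, p, …, y - 1`: the values are shifted so as to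
increase along this list. -/
def lamLabel (x y u : Fin (p + q)) : ℕ :=
  if (u : ℕ) < p then if x < u then u else u + p else if y < u then u + p else u + p + q

theorem lamLabel_gammaExt_pow (hx : x ∈ extSet p q) (hk : k < p - 1) :
    lamLabel x y ((gammaExt p q ^ (k + 1)) x) = x + (k + 1) := by
  have := val_gammaExt_pow_apply hx (k := k + 1) (by omega)
  rw [mem_extSet] at hx
  grind [lamLabel]

theorem lamLabel_gammaInt_pow (hy : y ∈ intSet p q) (hk : k < q - 1) :
    lamLabel x y ((gammaInt p q ^ (k + 1)) y) = y + (k + 1) + p := by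
  have := val_gammaInt_pow_apply hy (k := k + 1) (by omega)
  rw [mem_intSet] at hy
  grind [lamLabel]

theorem exists_gammaExt_pow_succ_apply_eq (hx : x ∈ extSet p q) :
    (∃ k < p - 1, (gammaExt p q ^ (k + 1)) x = u) ↔ u ∈ extSet p q ∧ u ≠ x := by
  have hx' := mem_extSet.1 hx
  refine ⟨?_, fun ⟨hu, hne⟩ => ?_⟩
  · rintro ⟨k, hk, rfl⟩
    rw [mem_extSet, Ne, Fin.ext_iff, val_gammaExt_pow_apply hx (by omega)]
    grind
  · obtain ⟨k, hk, rfl⟩ := exists_gammaExt_pow_apply_eq hx hu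
    rw [Ne, Fin.ext_iff, val_gammaExt_pow_apply hx hk] at hne
    exact ⟨k - 1, by grind, by grind⟩

theorem exists_gammaInt_pow_succ_apply_eq (hy : y ∈ intSet p q) :
    (∃ k < q - 1, (gammaInt p q ^ (k + 1)) y = u) ↔ u ∈ intSet p q ∧ u ≠ y := by
  have hy' := mem_intSet.1 hy
  refine ⟨?_, fun ⟨hu, hne⟩ => ?_⟩
  · rintro ⟨k, hk, rfl⟩
    rw [mem_intSet, Ne, Fin.ext_iff, val_gammaInt_pow_apply hy (by omega)]
    grind
  · obtain ⟨k, hk, rfl⟩ := exists_gammaInt_pow_apply_eq hy hu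
    rw [Ne, Fin.ext_iff, val_gammaInt_pow_apply hy hk] at hne
    exact ⟨k - 1, by grind, by grind⟩

theorem isCyclicOn_lamPerm (hx : x ∈ extSet p q) (hy : y ∈ intSet p q) :
    IsCyclicOn (lamPerm p q x y) (lamLabel x y) {u | u ≠ x ∧ u ≠ y} := by
  have hx' := mem_extSet.1 hx
  have hy' := mem_intSet.1 hy
  refine isCyclicOn_formPerm ?_ fun u => ?_
  · simp only [List.pairwise_append, List.pairwise_map, List.mem_map, List.mem_range,
      forall_exists_index, and_imp, forall_apply_eq_imp_iff₂]
    refine ⟨List.pairwise_lt_range.imp_of_mem fun hi hj hij => ?_,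
      List.pairwise_lt_range.imp_of_mem fun hi hj hij => ?_, fun i hi j hj => ?_⟩
    · rw [List.mem_range] at hi hj
      rw [lamLabel_gammaExt_pow hx hi, lamLabel_gammaExt_pow hx hj]
      omega
    · rw [List.mem_range] at hi hj
      rw [lamLabel_gammaInt_pow hy hi, lamLabel_gammaInt_pow hy hj]
      omega
    · rw [lamLabel_gammaExt_pow hx hi, lamLabel_gammaInt_pow hy hj]
      omega
  · simp only [List.mem_append, List.mem_map, List.mem_range,
      exists_gammaExt_pow_succ_apply_eq hx, exists_gammaInt_pow_succ_apply_eq hy]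
    grind [extSet, intSet]

end Cycles

section Standard

variable {α β : Type*} [LinearOrder β] {pos : α → β} {D : Set α} {τ : Perm α} {b : α}

/-- Every orbit of `τ` visits its points in `D` in the cyclic order given by `pos`. -/
def IsStandardOn (τ : Perm α) (pos : α → β) (D : Set α) : Prop :=
  ∀ b ∈ D, IsCyclicNext pos ({w | τ.SameCycle b w} ∩ D) b
    (induced τ ({w | τ.SameCycle b w} ∩ D) b)

/-- Every orbit of `τ` has at most one point in `D` that `τ` sends out of `D`. -/
def ExitsOnce (τ : Perm α) (D : Set α) : Prop :=
  ∀ a ∈ D, ∀ b ∈ D, τ.SameCycle a b → τ a ∉ D → τ b ∉ D → a = b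

theorem setOf_sameCycle_eq {a : α} (h : τ.SameCycle a b) :
    {w | τ.SameCycle a w} = {w | τ.SameCycle b w} :=
  Set.ext fun _ => ⟨h.symm.trans, h.trans⟩

theorem isStandardOn_iff_induced_eq [Finite α] {f : Perm α} (H : IsCyclicOn f pos D) :
    IsStandardOn τ pos D ↔ ∀ b ∈ D, induced τ ({w | τ.SameCycle b w} ∩ D) b =
      induced f ({w | τ.SameCycle b w} ∩ D) b := by
  refine forall₂_congr fun b hb => ?_
  have hmem : b ∈ {w | τ.SameCycle b w} ∩ D := ⟨.rfl, hb⟩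
  rw [eq_comm (a := induced τ _ b), H.induced_eq_iff hb hmem, Set.inter_assoc, Set.inter_self]

theorem isStandardOn_iff_forall_isOrbit [Finite α] {f : Perm α} (H : IsCyclicOn f pos D) :
    IsStandardOn τ pos D ↔
      ∀ A, IsOrbit τ A → ∀ b ∈ A ∩ D, induced τ (A ∩ D) b = induced f (A ∩ D) b := by
  rw [isStandardOn_iff_induced_eq H]
  constructor
  · rintro h _ ⟨a, rfl⟩ b ⟨hab, hb⟩
    exact setOf_sameCycle_eq hab ▸ h b hb
  · exact fun h b hb => h _ ⟨b, rfl⟩ b ⟨.rfl, hb⟩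

theorem isStandardOn_univ :
    IsStandardOn τ pos Set.univ ↔ ∀ b, IsCyclicNext pos {w | τ.SameCycle b w} b (τ b) := by
  simp only [IsStandardOn, Set.mem_univ, true_implies, Set.inter_univ]
  refine forall_congr' fun b => ?_
  rw [induced_eq_apply (sameCycle_iterate τ b 1)]

theorem IsStandardOn.isCyclicOn (h : IsStandardOn τ pos Set.univ) (hpos : pos.Injective) (b : α) :
    IsCyclicOn τ pos {w | τ.SameCycle b w} := by
  refine ⟨hpos.injOn, fun u hu => ?_⟩
  rw [setOf_sameCycle_eq hu]
  exact isStandardOn_univ.1 h u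

theorem IsStandardOn.of_univ [Finite α] (h : IsStandardOn τ pos Set.univ) (hpos : pos.Injective)
    (D : Set α) : IsStandardOn τ pos D := fun b hb => by
  have hnext := (h.isCyclicOn hpos b).isCyclicNext_induced (S := {w | τ.SameCycle b w} ∩ D)
    .rfl ⟨.rfl, hb⟩
  exact hnext.mono (fun w hw => ⟨hw, hw.1⟩) hnext.1.1

theorem IsStandardOn.isCyclicNext_apply (h : IsStandardOn τ pos D) (hb : b ∈ D)
    (hτb : τ b ∈ D) : IsCyclicNext pos ({w | τ.SameCycle b w} ∩ D) b (τ b) := by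
  have hmem : τ b ∈ {w | τ.SameCycle b w} ∩ D := ⟨sameCycle_iterate τ b 1, hτb⟩
  simpa only [induced_eq_apply hmem] using h b hb

theorem IsStandardOn.conj [Finite α] {f g : Perm α} (H : IsCyclicOn f pos D)
    (hf : g * f * g⁻¹ = f) (hD : g '' D = D) (h : IsStandardOn τ pos D) :
    IsStandardOn (g * τ * g⁻¹) pos D := by
  rw [isStandardOn_iff_induced_eq H] at h ⊢
  rw [← hD, Set.forall_mem_image]
  intro b hb
  have horbit : {w | (g * τ * g⁻¹).SameCycle (g b) w} = g '' {w | τ.SameCycle b w} := by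
    ext w
    obtain ⟨v, rfl⟩ := g.surjective w
    simp [Perm.sameCycle_conj]
  rw [horbit, ← Set.image_inter g.injective, induced_conj, h b hb, ← induced_conj f, hf]

theorem ExitsOnce.conj {g : Perm α} (hD : ∀ u, g u ∈ D ↔ u ∈ D) (h : ExitsOnce τ D) :
    ExitsOnce (g * τ * g⁻¹) D := by
  intro a ha b hb hab hτa hτb
  obtain ⟨a, rfl⟩ := g.surjective a
  obtain ⟨b, rfl⟩ := g.surjective b
  rw [Perm.sameCycle_conj] at hab
  simp only [Perm.mul_apply, Perm.inv_def, symm_apply_apply, hD] at *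
  exact congrArg g (h a ha b hb hab hτa hτb)

theorem ExitsOnce.isCyclicNext_reentry [Finite α] {a : α} (hexit : ExitsOnce τ Dᶜ)
    (hstd : IsStandardOn τ pos D) (ha : a ∈ D) (hτa : τ a ∉ D) (hb : b ∉ D) (hτb : τ b ∈ D)
    (hab : τ.SameCycle a b) :
    IsCyclicNext pos ({w | τ.SameCycle a w} ∩ D) a (τ b) := by
  have hnext := hstd a ha
  obtain ⟨c, hc, hac, heq⟩ := exists_notMem_apply_eq_induced ha hτa
  have hbc : b = c := hexit b hb c hc (hab.symm.trans hac) (not_not.2 hτb)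
    (not_not.2 (heq ▸ hnext.1.2))
  rwa [hbc, heq]

end Standard

section Patterns

variable {α : Type*} {f : Perm α} {S : Set α} {a b c d s w : α}

theorem eq_of_induced_eq_self [Finite α] (ha : a ∈ S) (h : induced f S a = a) (hw : w ∈ S)
    (haw : f.SameCycle a w) : w = a :=
  mem_of_sameCycle_of_induced_mem (T := {a}) (by simpa) (by simpa) rfl hw haw

theorem mapsSwap_iff [Finite α] (ha : a ∈ S) (hc : c ∈ S) (hne : a ≠ c) :
    MapsSwap f S a c ↔ f.SameCycle a c ∧ ∀ w ∈ S, f.SameCycle a w → w = a ∨ w = c := by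
  constructor
  · rintro ⟨hac, hca⟩
    refine ⟨hac ▸ sameCycle_induced f ha, fun w hw haw => ?_⟩
    exact mem_of_sameCycle_of_induced_mem (T := {a, c}) (by grind) (by grind) (by simp) hw haw
  · rintro ⟨hac, hall⟩
    constructor
    · have := hall _ (induced_mem f ha) (sameCycle_induced f ha)
      have := fun h => eq_of_induced_eq_self ha h hc hac
      grind
    · have := hall _ (induced_mem f hc) (hac.trans (sameCycle_induced f hc))
      have := fun h => eq_of_induced_eq_self hc h ha hac.symm
      grind

theorem mapsSwap2_iff_and : MapsSwap2 f S a b c d ↔ MapsSwap f S a c ∧ MapsSwap f S b d := by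
  rw [MapsSwap2, MapsSwap, MapsSwap, and_assoc]

theorem mapsCyc3_of_apply [Finite α] (hs : s ∈ S) (ht : f s ∈ S) (hw : w ∈ S) (hst : f s ≠ s)
    (hws : w ≠ s) (hwt : w ≠ f s) (hsw : f.SameCycle s w)
    (hall : ∀ u ∈ S, f.SameCycle s u → u = s ∨ u = f s ∨ u = w) : MapsCyc3 f S s (f s) w := by
  have hst' : f.SameCycle s (f s) := sameCycle_iterate f s 1
  have hs_next : induced f S s = f s := induced_eq_apply ht
  have ht_next : induced f S (f s) = w := by
    have := hall _ (induced_mem f ht) (hst'.trans (sameCycle_induced f ht))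
    have := fun h => eq_of_induced_eq_self ht h hs hst'.symm
    have : induced f S (f s) ≠ s := fun h => by
      have := mem_of_sameCycle_of_induced_mem (T := {s, f s}) (by grind) (by grind) (by simp) hw hsw
      grind
    grind
  refine ⟨hs_next, ht_next, ?_⟩
  have := hall _ (induced_mem f hw) (hsw.trans (sameCycle_induced f hw))
  have := fun h => eq_of_induced_eq_self hw h hs hsw.symm
  have : induced f S w ≠ f s := fun h => by
    have := mem_of_sameCycle_of_induced_mem (T := {f s, w}) (by grind) (by grind) (by simp) hs
      hst'.symm
    grind
  grind

theorem MapsSwap.conj (h : MapsSwap f S a c) (g : Perm α) :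
    MapsSwap (g * f * g⁻¹) (g '' S) (g a) (g c) := by
  simpa only [MapsSwap, induced_conj, g.apply_eq_iff_eq] using h

theorem MapsSwap2.conj (h : MapsSwap2 f S a b c d) (g : Perm α) :
    MapsSwap2 (g * f * g⁻¹) (g '' S) (g a) (g b) (g c) (g d) := by
  simpa only [MapsSwap2, induced_conj, g.apply_eq_iff_eq] using h

theorem MapsCyc3.conj (h : MapsCyc3 f S a b c) (g : Perm α) :
    MapsCyc3 (g * f * g⁻¹) (g '' S) (g a) (g b) (g c) := by
  simpa only [MapsCyc3, induced_conj, g.apply_eq_iff_eq] using h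

theorem MapsCyc4.conj (h : MapsCyc4 f S a b c d) (g : Perm α) :
    MapsCyc4 (g * f * g⁻¹) (g '' S) (g a) (g b) (g c) (g d) := by
  simpa only [MapsCyc4, induced_conj, g.apply_eq_iff_eq] using h

theorem formPerm_map_eq_conj [DecidableEq α] (g : Perm α) (l : List α) :
    (l.map g).formPerm = g * l.formPerm * g⁻¹ := by
  induction l with
  | nil => simp
  | cons a l ih =>
    cases l with
    | nil => simp
    | cons b l =>
      simp only [List.map_cons, List.formPerm_cons_cons, swap_apply_apply] at ih ⊢
      rw [ih]
      group

end Patterns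

section Crossings

variable {p q : ℕ} {τ : Perm (Fin (p + q))}

theorem mem_extSet_of_gammaAnn_sameCycle {u v : Fin (p + q)} (h : (gammaAnn p q).SameCycle u v)
    (hu : u ∈ extSet p q) : v ∈ extSet p q :=
  mem_of_sameCycle_of_induced_mem (S := Set.univ) (Set.subset_univ _)
    (fun w hw => by
      rw [induced_eq_apply (Set.mem_univ _)]
      exact ((isCyclicOn_gammaAnn_extSet p q).next w hw).1) hu (Set.mem_univ v) h

theorem mapsCyc4_gammaAnn_iff {a b c d : Fin (p + q)} (hne : [a, b, c, d].Pairwise (· ≠ ·)) :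
    MapsCyc4 (gammaAnn p q) {a, b, c, d} a b c d ↔
      (({a, b, c, d} : Set _) ⊆ extSet p q ∨ ({a, b, c, d} : Set _) ⊆ intSet p q) ∧
        sbtw (a : ℕ) b c ∧ sbtw (a : ℕ) c d := by
  simp only [Set.insert_subset_iff, Set.singleton_subset_iff]
  constructor
  · intro h
    have hext : ∀ u ∈ ({a, b, c, d} : Set _), u ∈ extSet p q →
        induced (gammaAnn p q) {a, b, c, d} u ∈ extSet p q := fun u hu =>
      mem_extSet_of_gammaAnn_sameCycle (sameCycle_induced _ hu)
    have ha := hext a (by simp)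
    have hb := hext b (by simp)
    have hc := hext c (by simp)
    have hd := hext d (by simp)
    rw [h.1] at ha
    rw [h.2.1] at hb
    rw [h.2.2.1] at hc
    rw [h.2.2.2] at hd
    by_cases hmem : a ∈ extSet p q
    · have hall : a ∈ extSet p q ∧ b ∈ extSet p q ∧ c ∈ extSet p q ∧ d ∈ extSet p q := by tauto
      refine ⟨.inl hall, ((isCyclicOn_gammaAnn_extSet p q).mapsCyc4_iff hall.1 hall.2.1 hall.2.2.1
        hall.2.2.2 hne).1 h⟩
    · have hall : a ∈ intSet p q ∧ b ∈ intSet p q ∧ c ∈ intSet p q ∧ d ∈ intSet p q := by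
        simp only [← notMem_extSet]
        tauto
      refine ⟨.inr hall, ((isCyclicOn_gammaAnn_intSet p q).mapsCyc4_iff hall.1 hall.2.1 hall.2.2.1
        hall.2.2.2 hne).1 h⟩
  · rintro ⟨⟨ha, hb, hc, hd⟩ | ⟨ha, hb, hc, hd⟩, h⟩
    · exact ((isCyclicOn_gammaAnn_extSet p q).mapsCyc4_iff ha hb hc hd hne).2 h
    · exact ((isCyclicOn_gammaAnn_intSet p q).mapsCyc4_iff ha hb hc hd hne).2 h

theorem AC1_iff :
    AC1 p q τ ↔ ∃ a b c d : Fin (p + q),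
      (({a, b, c, d} : Set _) ⊆ extSet p q ∨ ({a, b, c, d} : Set _) ⊆ intSet p q) ∧
      sbtw (a : ℕ) b c ∧ sbtw (a : ℕ) c d ∧
      τ.SameCycle a c ∧ τ.SameCycle b d ∧ ¬ τ.SameCycle a b := by
  constructor
  · rintro ⟨a, b, c, d, hne, hcyc, hswap⟩
    obtain ⟨hside, hord⟩ := (mapsCyc4_gammaAnn_iff hne).1 hcyc
    simp only [List.pairwise_cons, List.mem_cons, List.not_mem_nil, or_false] at hne
    rw [mapsSwap2_iff_and, mapsSwap_iff (by simp) (by simp) (by grind),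
      mapsSwap_iff (by simp) (by simp) (by grind)] at hswap
    exact ⟨a, b, c, d, hside, hord.1, hord.2, hswap.1.1, hswap.2.1, by grind⟩
  · rintro ⟨a, b, c, d, hside, habc, hacd, hac, hbd, hab⟩
    have hne : [a, b, c, d].Pairwise (· ≠ ·) := by
      simp only [sbtw_iff_lt] at habc hacd
      simp only [List.pairwise_cons, List.mem_cons]
      grind
    refine ⟨a, b, c, d, hne, (mapsCyc4_gammaAnn_iff hne).2 ⟨hside, habc, hacd⟩, ?_⟩
    simp only [List.pairwise_cons, List.mem_cons, List.not_mem_nil, or_false] at hne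
    rw [mapsSwap2_iff_and, mapsSwap_iff (by simp) (by simp) (by grind),
      mapsSwap_iff (by simp) (by simp) (by grind)]
    simp only [sameCycle_iff_mk_eq] at hac hbd hab ⊢
    grind

theorem AC3_iff :
    AC3 p q τ ↔ ∃ a b c d x y : Fin (p + q), x ∈ extSet p q ∧ y ∈ intSet p q ∧
      sbtw (lamLabel x y a) (lamLabel x y b) (lamLabel x y c) ∧
      sbtw (lamLabel x y a) (lamLabel x y c) (lamLabel x y d) ∧
      τ.SameCycle x y ∧ τ.SameCycle a c ∧ τ.SameCycle b d ∧
      ¬ τ.SameCycle a b ∧ ¬ τ.SameCycle a x ∧ ¬ τ.SameCycle b x := by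
  constructor
  · rintro ⟨a, b, c, d, x, y, hne, hx, hy, hcyc, hswap, hxy⟩
    have hsub : ([a, b, c, d].Sublist [a, b, c, d, x, y]) := List.sublist_append_left _ [x, y]
    have hne4 := hne.sublist hsub
    simp only [List.pairwise_cons, List.mem_cons, List.not_mem_nil, or_false] at hne
    have H := isCyclicOn_lamPerm hx hy
    obtain ⟨habc, hacd⟩ :=
      (H.mapsCyc4_iff (by grind) (by grind) (by grind) (by grind) hne4).1 hcyc
    rw [mapsSwap2_iff_and, mapsSwap_iff (by simp) (by simp) (by grind),
      mapsSwap_iff (by simp) (by simp) (by grind)] at hswap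
    obtain ⟨hxy, -⟩ := (mapsSwap_iff (by simp) (by simp) (by grind)).1 hxy
    exact ⟨a, b, c, d, x, y, hx, hy, habc, hacd, hxy, hswap.1.1, hswap.2.1,
      by grind, by grind, by grind⟩
  · rintro ⟨a, b, c, d, x, y, hx, hy, habc, hacd, hxy, hac, hbd, hab, hax, hbx⟩
    have hne : [a, b, c, d, x, y].Pairwise (· ≠ ·) := by
      have : x ≠ y := fun h => notMem_extSet.2 hy (h ▸ hx)
      simp only [sbtw_iff_lt] at habc hacd
      simp only [sameCycle_iff_mk_eq] at hxy hac hbd hab hax hbx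
      simp only [List.pairwise_cons, List.mem_cons, List.not_mem_nil, or_false]
      grind
    have hne4 := hne.sublist (List.sublist_append_left [a, b, c, d] [x, y])
    simp only [List.pairwise_cons, List.mem_cons, List.not_mem_nil, or_false] at hne
    refine ⟨a, b, c, d, x, y, by simpa using hne, hx, hy,
      ((isCyclicOn_lamPerm hx hy).mapsCyc4_iff (by grind) (by grind) (by grind) (by grind)
        hne4).2 ⟨habc, hacd⟩, ?_⟩
    rw [mapsSwap2_iff_and, mapsSwap_iff (by simp) (by simp) (by grind),
      mapsSwap_iff (by simp) (by simp) (by grind), mapsSwap_iff (by simp) (by simp) (by grind)]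
    simp only [sameCycle_iff_mk_eq] at hxy hac hbd hab hax hbx ⊢
    grind

theorem AC2_of_sbtw {s w x y : Fin (p + q)} (hx : x ∈ extSet p q) (hy : y ∈ intSet p q)
    (hxy : τ.SameCycle x y) (hsw : τ.SameCycle s w) (hsx : ¬ τ.SameCycle s x)
    (hord : sbtw (lamLabel x y s) (lamLabel x y w) (lamLabel x y (τ s))) : AC2 p q τ := by
  have hst : τ.SameCycle s (τ s) := sameCycle_iterate τ s 1
  have hxy' : x ≠ y := fun h => notMem_extSet.2 hy (h ▸ hx)
  have hne : [s, w, τ s, x, y].Pairwise (· ≠ ·) := by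
    simp only [sbtw_iff_lt] at hord
    simp only [sameCycle_iff_mk_eq] at hxy hsw hsx hst
    simp only [List.pairwise_cons, List.mem_cons, List.not_mem_nil, or_false]
    grind
  refine ⟨s, w, τ s, x, y, hne, hx, hy, ?_⟩
  simp only [List.pairwise_cons, List.mem_cons, List.not_mem_nil, or_false] at hne
  refine ⟨((isCyclicOn_lamPerm hx hy).mapsCyc3_iff (by grind) (by grind) (by grind) (by grind)
    (by grind) (by grind)).2 hord, mapsCyc3_of_apply (by simp) (by simp) (by simp) (by grind)
    (by grind) (by grind) hsw ?_, (mapsSwap_iff (by simp) (by simp) hxy').2 ⟨hxy, ?_⟩⟩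
  all_goals
    simp only [sameCycle_iff_mk_eq] at hxy hsw hsx hst ⊢
    grind

end Crossings

section Disc

theorem discStandardRel_iff {n : ℕ} {τ : Perm (Fin n)} :
    DiscStandardRel (finRotate n) τ ↔ IsStandardOn τ Fin.val Set.univ := by
  simp only [isStandardOn_iff_forall_isOrbit (isCyclicOn_finRotate n), Set.inter_univ,
    DiscStandardRel]

variable {p q : ℕ} {τ : Perm (Fin (p + q))}

theorem annStandard_iff :
    AnnStandard p q τ ↔
      (IsStandardOn τ Fin.val (extSet p q) ∧ IsStandardOn τ Fin.val (intSet p q)) ∧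
        ExitsOnce τ (extSet p q) ∧ ExitsOnce τ (intSet p q) := by
  rw [isStandardOn_iff_forall_isOrbit (isCyclicOn_gammaExt p q),
    isStandardOn_iff_forall_isOrbit (isCyclicOn_gammaInt p q)]
  simp only [ExitsOnce, notMem_extSet, notMem_intSet]
  constructor
  · rintro ⟨hstd, hexit⟩
    refine ⟨⟨fun A hA => (hstd A hA).1, fun A hA => (hstd A hA).2⟩, ?_, ?_⟩
    · intro a ha b hb hab hτa hτb
      exact (hexit _ ⟨a, rfl⟩ ⟨a, .rfl, ha⟩ ⟨τ a, sameCycle_iterate τ a 1, hτa⟩).1.unique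
        ⟨⟨.rfl, ha⟩, hτa⟩ ⟨⟨hab, hb⟩, hτb⟩
    · intro a ha b hb hab hτa hτb
      exact (hexit _ ⟨a, rfl⟩ ⟨τ a, sameCycle_iterate τ a 1, hτa⟩ ⟨a, .rfl, ha⟩).2.unique
        ⟨⟨.rfl, ha⟩, hτa⟩ ⟨⟨hab, hb⟩, hτb⟩
  · rintro ⟨⟨hext, hint⟩, hexit, hexit'⟩
    refine ⟨fun A hA => ⟨hext A hA, hint A hA⟩, ?_⟩
    rintro _ ⟨c, rfl⟩ ⟨u, hcu, hu⟩ ⟨v, hcv, hv⟩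
    obtain ⟨a, hua, ha, hτa⟩ := exists_mem_apply_notMem hu (notMem_extSet.2 hv) (hcu.symm.trans hcv)
    obtain ⟨b, hvb, hb, hτb⟩ := exists_mem_apply_notMem hv (notMem_intSet.2 hu) (hcv.symm.trans hcu)
    rw [notMem_extSet] at hτa
    rw [notMem_intSet] at hτb
    exact ⟨⟨a, ⟨⟨hcu.trans hua, ha⟩, hτa⟩, fun a' ⟨⟨hca', ha'⟩, hτa'⟩ =>
        hexit a' ha' a ha (hca'.symm.trans (hcu.trans hua)) hτa' hτa⟩,
      ⟨b, ⟨⟨hcv.trans hvb, hb⟩, hτb⟩, fun b' ⟨⟨hcb', hb'⟩, hτb'⟩ =>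
        hexit' b' hb' b hb (hcb'.symm.trans (hcv.trans hvb)) hτb' hτb⟩⟩

theorem AnnStandard.of_discStandardRel (h : DiscStandardRel (finRotate (p + q)) τ) :
    AnnStandard p q τ := by
  rw [discStandardRel_iff] at h
  have hnext := isStandardOn_univ.1 h
  refine annStandard_iff.2
    ⟨⟨h.of_univ Fin.val_injective _, h.of_univ Fin.val_injective _⟩, ?_, ?_⟩
  all_goals
    intro a ha b hb hab hτa hτb
    have hlt := (hnext a).2 b hab
    have hlt' := (hnext b).2 a hab.symm
    rw [sbtw_iff_lt] at hlt hlt'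
    simp only [mem_extSet, mem_intSet] at ha hb hτa hτb
    exact Fin.ext (by omega)

theorem OrbitsNoCrossing.sameCycle_of_sbtw {n : ℕ} {τ : Perm (Fin n)} (h : OrbitsNoCrossing τ)
    {a b c d : Fin n} (habc : sbtw (a : ℕ) b c) (hacd : sbtw (a : ℕ) c d)
    (hac : τ.SameCycle a c) (hbd : τ.SameCycle b d) : τ.SameCycle a b := by
  by_contra hab
  have hnc : ∀ a b c d : Fin n, (a : ℕ) < b → (b : ℕ) < c → (c : ℕ) < d → τ.SameCycle a c →
      τ.SameCycle b d → τ.SameCycle a b := fun a b c d h₁ h₂ h₃ h₄ h₅ => by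
    by_contra h₆
    exact h ⟨a, b, c, d, h₁, h₂, h₃, h₄, h₅, h₆⟩
  simp only [sbtw_iff_lt] at habc hacd
  simp only [sameCycle_iff_mk_eq] at *
  grind

theorem OrbitsNoCrossing.between_iff {n : ℕ} {τ : Perm (Fin n)} (h : OrbitsNoCrossing τ)
    {x y a c : Fin n} (hxy : τ.SameCycle x y) (hac : τ.SameCycle a c)
    (hax : ¬ τ.SameCycle a x) : x < a ∧ a < y ↔ x < c ∧ c < y := by
  have hcross : ∀ a c : Fin n, sbtw (x : ℕ) a y → sbtw (x : ℕ) y c → τ.SameCycle a c →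
      τ.SameCycle x a := fun a c h₁ h₂ => h.sameCycle_of_sbtw h₁ h₂ hxy
  simp only [sbtw_iff_lt] at hcross
  simp only [sameCycle_iff_mk_eq] at *
  grind

variable {x y u v : Fin (p + q)}

theorem lamLabel_lt_lamLabel_iff (hx : x ∈ extSet p q) (hy : y ∈ intSet p q)
    (hu : u ≠ x ∧ u ≠ y) (hv : v ≠ x ∧ v ≠ y) (hside : x < u ∧ u < y ↔ x < v ∧ v < y) :
    lamLabel x y u < lamLabel x y v ↔ u < v := by
  rw [mem_extSet] at hx
  rw [mem_intSet] at hy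
  grind [lamLabel]

theorem sbtw_lamLabel_iff {w : Fin (p + q)} (hx : x ∈ extSet p q) (hy : y ∈ intSet p q)
    (hu : u ≠ x ∧ u ≠ y) (hv : v ≠ x ∧ v ≠ y) (hw : w ≠ x ∧ w ≠ y)
    (huv : x < u ∧ u < y ↔ x < v ∧ v < y) (huw : x < u ∧ u < y ↔ x < w ∧ w < y) :
    sbtw (lamLabel x y u) (lamLabel x y v) (lamLabel x y w) ↔ sbtw (u : ℕ) v w := by
  simp only [sbtw_iff_lt, lamLabel_lt_lamLabel_iff hx hy hu hv huv,
    lamLabel_lt_lamLabel_iff hx hy hv hw (huv.symm.trans huw),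
    lamLabel_lt_lamLabel_iff hx hy hw hu huw.symm, Fin.lt_def]

-- The points outside the arc from `x` to `y` are consecutive in `λ_{x,y}`, where they read
-- `0, …, x - 1, y + 1, …, p + q - 1`.
theorem lamLabel_mem_Ico_iff (hx : x ∈ extSet p q) (hy : y ∈ intSet p q)
    (hu : u ≠ x ∧ u ≠ y) : p ≤ lamLabel x y u ∧ lamLabel x y u < 2 * p + q ↔ ¬ (x < u ∧ u < y) := by
  rw [mem_extSet] at hx
  rw [mem_intSet] at hy
  grind [lamLabel]

theorem DiscNC.not_AC1 (h : DiscNC τ) : ¬ AC1 p q τ := by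
  rw [AC1_iff]
  rintro ⟨a, b, c, d, -, habc, hacd, hac, hbd, hab⟩
  exact hab (h.2.sameCycle_of_sbtw habc hacd hac hbd)

theorem DiscNC.not_AC2 (h : DiscNC τ) : ¬ AC2 p q τ := by
  rintro ⟨a, b, c, x, y, hne, hx, hy, hlam, hcyc, hswap⟩
  simp only [List.pairwise_cons, List.mem_cons, List.not_mem_nil, or_false] at hne
  rw [(isCyclicOn_lamPerm hx hy).mapsCyc3_iff (by grind) (by grind) (by grind) (by grind)
    (by grind) (by grind)] at hlam
  obtain ⟨hxy, hx_orbit⟩ := (mapsSwap_iff (by simp) (by simp) (by grind)).1 hswap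
  have hac : τ.SameCycle a c := hcyc.1 ▸ sameCycle_induced τ (by simp)
  have hcb : τ.SameCycle c b := hcyc.2.1 ▸ sameCycle_induced τ (by simp)
  have hax : ¬ τ.SameCycle a x := fun hax => by
    have := hx_orbit a (by simp) hax.symm
    grind
  have hb_side := h.2.between_iff hxy (hac.trans hcb) hax
  have hc_side := h.2.between_iff hxy hac hax
  have hacb : sbtw (a : ℕ) c b := by
    have hnext := ((discStandardRel_iff.1 h.1).isCyclicOn Fin.val_injective a).isCyclicNext_induced
      (S := {a, b, c, x, y}) .rfl (by simp)
    have hb := hnext.2 b ⟨by simp, hac.trans hcb⟩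
    rw [hcyc.1] at hb
    grind
  exact sbtw_asymm hacb.cyclic_left ((sbtw_lamLabel_iff hx hy (by grind) (by grind) (by grind)
    hb_side hc_side).1 hlam)

theorem DiscNC.not_AC3 (h : DiscNC τ) : ¬ AC3 p q τ := by
  rw [AC3_iff]
  rintro ⟨a, b, c, d, x, y, hx, hy, habc, hacd, hxy, hac, hbd, hab, hax, hbx⟩
  have hc_side := h.2.between_iff hxy hac hax
  have hd_side := h.2.between_iff hxy hbd hbx
  have hne : ∀ u, τ.SameCycle a u ∨ τ.SameCycle b u → u ≠ x ∧ u ≠ y := by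
    simp only [sameCycle_iff_mk_eq] at *
    grind
  have ha' := hne a (.inl .rfl)
  have hb' := hne b (.inr .rfl)
  have hc' := hne c (.inl hac)
  have hd' := hne d (.inr hbd)
  by_cases hb_side : x < a ∧ a < y ↔ x < b ∧ b < y
  · exact hab (h.2.sameCycle_of_sbtw
      ((sbtw_lamLabel_iff hx hy ha' hb' hc' hb_side hc_side).1 habc)
      ((sbtw_lamLabel_iff hx hy ha' hc' hd' hc_side (hb_side.trans hd_side)).1 hacd) hac hbd)
  · have ha := lamLabel_mem_Ico_iff hx hy ha'
    have hb := lamLabel_mem_Ico_iff hx hy hb'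
    have hc := lamLabel_mem_Ico_iff hx hy hc'
    have hd := lamLabel_mem_Ico_iff hx hy hd'
    rw [sbtw_iff_lt] at habc hacd
    grind

theorem DiscNC.annNC (h : DiscNC τ) : AnnNC p q τ :=
  ⟨.of_discStandardRel h.1, h.not_AC1, h.not_AC2, h.not_AC3⟩

end Disc

section Symmetry

open Pointwise

variable {p q : ℕ} {g τ : Perm (Fin (p + q))}

/-- The rotations of the annulus: permutations that preserve both boundary circles and commute with
the forward cycles of both. -/
def annSymmetries (p q : ℕ) : Subgroup (Perm (Fin (p + q))) :=
  Subgroup.centralizer {gammaExt p q, gammaInt p q} ⊓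
    MulAction.stabilizer (Perm (Fin (p + q))) (extSet p q)

theorem mem_annSymmetries :
    g ∈ annSymmetries p q ↔ Commute g (gammaExt p q) ∧ Commute g (gammaInt p q) ∧
      ∀ u, g u ∈ extSet p q ↔ u ∈ extSet p q := by
  simp only [annSymmetries, Subgroup.mem_inf, Subgroup.mem_centralizer_iff,
    MulAction.mem_stabilizer_set, Set.mem_insert_iff, Set.mem_singleton_iff, forall_eq_or_imp,
    forall_eq, Perm.smul_def, and_assoc, commute_iff_eq, eq_comm]

theorem gammaExt_apply_mem_extSet (u : Fin (p + q)) :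
    gammaExt p q u ∈ extSet p q ↔ u ∈ extSet p q := by
  by_cases hu : u ∈ extSet p q
  · exact iff_of_true ((isCyclicOn_gammaExt p q).next u hu).1 hu
  · rw [gammaExt_apply_of_mem_intSet (notMem_extSet.1 hu)]

theorem gammaInt_apply_mem_extSet (u : Fin (p + q)) :
    gammaInt p q u ∈ extSet p q ↔ u ∈ extSet p q := by
  by_cases hu : u ∈ extSet p q
  · rw [gammaInt_apply_of_mem_extSet hu]
  · have hnext := (isCyclicOn_gammaInt p q).next u (notMem_extSet.1 hu)
    exact iff_of_false (notMem_extSet.2 hnext.1) hu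

theorem commute_gammaExt_gammaInt (p q : ℕ) : Commute (gammaExt p q) (gammaInt p q) :=
  Perm.Disjoint.commute fun u => by
    by_cases hu : u ∈ extSet p q
    · exact .inr (gammaInt_apply_of_mem_extSet hu)
    · exact .inl (gammaExt_apply_of_mem_intSet (notMem_extSet.1 hu))

theorem gammaExt_mem_annSymmetries (p q : ℕ) : gammaExt p q ∈ annSymmetries p q :=
  mem_annSymmetries.2 ⟨.refl _, commute_gammaExt_gammaInt p q, gammaExt_apply_mem_extSet⟩

theorem gammaInt_mem_annSymmetries (p q : ℕ) : gammaInt p q ∈ annSymmetries p q :=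
  mem_annSymmetries.2 ⟨(commute_gammaExt_gammaInt p q).symm, .refl _, gammaInt_apply_mem_extSet⟩

theorem exists_rotation_apply_eq {x u y v : Fin (p + q)} (hx : x ∈ extSet p q)
    (hu : u ∈ extSet p q) (hy : y ∈ intSet p q) (hv : v ∈ intSet p q) :
    ∃ i j : ℕ, (gammaExt p q ^ i * gammaInt p q ^ j) x = u ∧
      (gammaExt p q ^ i * gammaInt p q ^ j) y = v := by
  obtain ⟨i, -, hi⟩ := exists_gammaExt_pow_apply_eq hx hu
  obtain ⟨j, -, hj⟩ := exists_gammaInt_pow_apply_eq hy hv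
  refine ⟨i, j, ?_, ?_⟩
  · rw [Perm.mul_apply, Perm.pow_apply_eq_self_of_apply_eq_self (gammaInt_apply_of_mem_extSet hx),
      hi]
  · rw [Perm.mul_apply, hj, Perm.pow_apply_eq_self_of_apply_eq_self
      (gammaExt_apply_of_mem_intSet hv)]

theorem conj_gammaAnn (hg : g ∈ annSymmetries p q) : g * gammaAnn p q * g⁻¹ = gammaAnn p q := by
  obtain ⟨hext, hint, -⟩ := mem_annSymmetries.1 hg
  exact mul_inv_eq_of_eq_mul (hext.mul_right hint)

theorem conj_lamPerm (hg : g ∈ annSymmetries p q) (x y : Fin (p + q)) :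
    g * lamPerm p q x y * g⁻¹ = lamPerm p q (g x) (g y) := by
  obtain ⟨hext, hint, -⟩ := mem_annSymmetries.1 hg
  have hext_apply (k : ℕ) : g ((gammaExt p q ^ (k + 1)) x) = (gammaExt p q ^ (k + 1)) (g x) :=
    Perm.congr_fun (hext.pow_right (k + 1)) x
  have hint_apply (k : ℕ) : g ((gammaInt p q ^ (k + 1)) y) = (gammaInt p q ^ (k + 1)) (g y) :=
    Perm.congr_fun (hint.pow_right (k + 1)) y
  simp only [lamPerm, ← formPerm_map_eq_conj, List.map_append, List.map_map, Function.comp_def,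
    hext_apply, hint_apply]

theorem AC1.conj (hg : g ∈ annSymmetries p q) (h : AC1 p q τ) : AC1 p q (g * τ * g⁻¹) := by
  obtain ⟨a, b, c, d, hne, hcyc, hswap⟩ := h
  refine ⟨g a, g b, g c, g d, hne.map g fun _ _ => g.injective.ne, ?_, ?_⟩
  · simpa only [conj_gammaAnn hg, Set.image_insert_eq, Set.image_singleton] using hcyc.conj g
  · simpa only [Set.image_insert_eq, Set.image_singleton] using hswap.conj g

theorem AC2.conj (hg : g ∈ annSymmetries p q) (h : AC2 p q τ) : AC2 p q (g * τ * g⁻¹) := by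
  have hside := (mem_annSymmetries.1 hg).2.2
  obtain ⟨a, b, c, x, y, hne, hx, hy, hlam, hcyc, hswap⟩ := h
  refine ⟨g a, g b, g c, g x, g y, hne.map g fun _ _ => g.injective.ne, (hside x).2 hx,
    notMem_extSet.1 ((hside y).not.2 (notMem_extSet.2 hy)), ?_, ?_, ?_⟩
  · simpa only [conj_lamPerm hg, Set.image_insert_eq, Set.image_singleton] using hlam.conj g
  · simpa only [Set.image_insert_eq, Set.image_singleton] using hcyc.conj g
  · simpa only [Set.image_insert_eq, Set.image_singleton] using hswap.conj g

theorem AC3.conj (hg : g ∈ annSymmetries p q) (h : AC3 p q τ) : AC3 p q (g * τ * g⁻¹) := by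
  have hside := (mem_annSymmetries.1 hg).2.2
  obtain ⟨a, b, c, d, x, y, hne, hx, hy, hlam, hswap2, hswap⟩ := h
  refine ⟨g a, g b, g c, g d, g x, g y, hne.map g fun _ _ => g.injective.ne, (hside x).2 hx,
    notMem_extSet.1 ((hside y).not.2 (notMem_extSet.2 hy)), ?_, ?_, ?_⟩
  · simpa only [conj_lamPerm hg, Set.image_insert_eq, Set.image_singleton] using hlam.conj g
  · simpa only [Set.image_insert_eq, Set.image_singleton] using hswap2.conj g
  · simpa only [Set.image_insert_eq, Set.image_singleton] using hswap.conj g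

theorem AnnStandard.conj (hg : g ∈ annSymmetries p q) (h : AnnStandard p q τ) :
    AnnStandard p q (g * τ * g⁻¹) := by
  obtain ⟨hext, hint, hside⟩ := mem_annSymmetries.1 hg
  have hside' : ∀ u, g u ∈ intSet p q ↔ u ∈ intSet p q := fun u => by
    rw [← notMem_extSet, hside, notMem_extSet]
  have himage {D : Set (Fin (p + q))} (hD : ∀ u, g u ∈ D ↔ u ∈ D) : g '' D = D := by
    ext u
    rw [g.image_eq_preimage_symm, Set.mem_preimage, ← hD, apply_symm_apply]
  obtain ⟨⟨hstd, hstd'⟩, hexit, hexit'⟩ := annStandard_iff.1 h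
  exact annStandard_iff.2
    ⟨⟨hstd.conj (isCyclicOn_gammaExt p q) (mul_inv_eq_of_eq_mul hext) (himage hside),
      hstd'.conj (isCyclicOn_gammaInt p q) (mul_inv_eq_of_eq_mul hint) (himage hside')⟩,
      hexit.conj hside, hexit'.conj hside'⟩

theorem AnnNC.conj (hg : g ∈ annSymmetries p q) (h : AnnNC p q τ) :
    AnnNC p q (g * τ * g⁻¹) := by
  have hback : g⁻¹ * (g * τ * g⁻¹) * g⁻¹⁻¹ = τ := by group
  have hg' := inv_mem hg
  exact ⟨h.1.conj hg, fun h₁ => h.2.1 (hback ▸ h₁.conj hg'),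
    fun h₂ => h.2.2.1 (hback ▸ h₂.conj hg'), fun h₃ => h.2.2.2 (hback ▸ h₃.conj hg')⟩

end Symmetry

section Converse

variable {p q : ℕ} {τ : Perm (Fin (p + q))}

theorem AnnNC.discNC_of_mapsTo (h : AnnNC p q τ) (hτ : ∀ u ∈ extSet p q, τ u ∈ extSet p q) :
    DiscNC τ := by
  have hstay {u v : Fin (p + q)} (huv : τ.SameCycle u v) (hu : u ∈ extSet p q) :
      v ∈ extSet p q := by
    by_contra hv
    obtain ⟨a, -, ha, hτa⟩ := exists_mem_apply_notMem hu hv huv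
    exact hτa (hτ a ha)
  obtain ⟨⟨hstd, hstd'⟩, -⟩ := annStandard_iff.1 h.1
  refine ⟨discStandardRel_iff.2 (isStandardOn_univ.2 fun b => ?_), ?_⟩
  · have hτb : τ.SameCycle b (τ b) := sameCycle_iterate τ b 1
    by_cases hb : b ∈ extSet p q
    · exact (hstd.isCyclicNext_apply hb (hτ b hb)).mono (fun w hw => ⟨hw, hstay hw hb⟩) hτb
    · have hint {w} (hw : τ.SameCycle b w) : w ∈ intSet p q :=
        notMem_extSet.1 fun hw' => hb (hstay hw.symm hw')
      exact (hstd'.isCyclicNext_apply (hint .rfl) (hint hτb)).mono (fun w hw => ⟨hw, hint hw⟩) hτb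
  · rintro ⟨a, b, c, d, hab, hbc, hcd, hac, hbd, hab'⟩
    refine h.2.1 (AC1_iff.2 ⟨a, b, c, d, ?_, .inl ⟨hab, hbc⟩, .inl ⟨hab.trans hbc, hcd⟩, hac, hbd,
      hab'⟩)
    have := hstay hac
    have := hstay hbd
    simp only [Set.insert_subset_iff, Set.singleton_subset_iff, mem_extSet, mem_intSet] at *
    omega

section Adjacent

variable {x y : Fin (p + q)} (hx : (x : ℕ) + 1 = p) (hy : (y : ℕ) = p)
include hx hy

theorem sbtw_lamLabel_iff_of_adjacent {u v w : Fin (p + q)} (hu : u ≠ x ∧ u ≠ y)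
    (hv : v ≠ x ∧ v ≠ y) (hw : w ≠ x ∧ w ≠ y) :
    sbtw (lamLabel x y u) (lamLabel x y v) (lamLabel x y w) ↔ sbtw (u : ℕ) v w :=
  sbtw_lamLabel_iff (mem_extSet.2 (by omega)) (mem_intSet.2 hy.ge) hu hv hw (by omega) (by omega)

variable (hxy : τ x = y)
include hxy

theorem AnnStandard.isCyclicNext_of_sameCycle (h : AnnStandard p q τ) {b : Fin (p + q)}
    (hb : τ.SameCycle x b) : IsCyclicNext Fin.val {w | τ.SameCycle b w} b (τ b) := by
  obtain ⟨⟨hstd, hstd'⟩, hexit, hexit'⟩ := annStandard_iff.1 h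
  have hx_ext : x ∈ extSet p q := mem_extSet.2 (by omega)
  have hy_int : y ∈ intSet p q := hy.ge
  have hτx : τ x ∉ extSet p q := by rwa [hxy, notMem_extSet]
  have hτb : τ.SameCycle b (τ b) := sameCycle_iterate τ b 1
  have hby : τ.SameCycle b y := hb.symm.trans (hxy ▸ sameCycle_iterate τ x 1)
  refine ⟨hτb, fun w hw => ?_⟩
  by_cases hb_ext : b ∈ extSet p q <;> by_cases hτb_ext : τ b ∈ extSet p q
  · have hnext := hstd.isCyclicNext_apply hb_ext hτb_ext
    have hbx : b ≠ x := fun h => hτx (h ▸ hτb_ext)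
    have hnext_x := hnext.2 x ⟨hb.symm, hx_ext⟩
    have hnext_w := fun hw_ext => hnext.2 w ⟨hw, hw_ext⟩
    simp only [sbtw_iff_lt, mem_extSet] at *
    omega
  · obtain rfl := hexit x hx_ext b hb_ext hb hτx hτb_ext
    rw [hxy, sbtw_iff_lt]
    omega
  · have hb_max := (compl_intSet p q ▸ hexit).isCyclicNext_reentry hstd' (notMem_extSet.1 hb_ext)
      (notMem_intSet.2 hτb_ext) (notMem_intSet.2 hx_ext) (notMem_extSet.1 hτx) hb.symm
    have hτb_min := (compl_extSet p q ▸ hexit').isCyclicNext_reentry hstd hx_ext hτx hb_ext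
      hτb_ext hb
    have hnext_w := fun hw_int => hb_max.2 w ⟨hw, hw_int⟩
    have hnext_w' := fun hw_ext => hτb_min.2 w ⟨hb.trans hw, hw_ext⟩
    simp only [sbtw_iff_lt, mem_extSet, mem_intSet] at *
    omega
  · rw [notMem_extSet] at hb_ext hτb_ext
    have hnext := hstd'.isCyclicNext_apply hb_ext hτb_ext
    have hτb_ne : τ b ≠ y := fun h =>
      notMem_extSet.2 hb_ext (τ.injective (h.trans hxy.symm) ▸ hx_ext)
    have hnext_y := hnext.2 y ⟨hby, hy_int⟩
    have hnext_w := fun hw_int => hnext.2 w ⟨hw, hw_int⟩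
    simp only [sbtw_iff_lt, mem_extSet, mem_intSet] at *
    omega

theorem AnnNC.isCyclicNext_of_not_sameCycle (h : AnnNC p q τ) {b : Fin (p + q)}
    (hb : ¬ τ.SameCycle b x) : IsCyclicNext Fin.val {w | τ.SameCycle b w} b (τ b) := by
  have hτb : τ.SameCycle b (τ b) := sameCycle_iterate τ b 1
  have hxy' : τ.SameCycle x y := hxy ▸ sameCycle_iterate τ x 1
  refine ⟨hτb, fun w hw => ?_⟩
  rw [Set.mem_ofPred_eq] at hw
  have hbtw : ¬ sbtw (b : ℕ) w (τ b) := fun hbtw => h.2.2.1 <| by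
    refine AC2_of_sbtw (mem_extSet.2 (by omega)) hy.ge hxy' hw hb
      ((sbtw_lamLabel_iff_of_adjacent hx hy ?_ ?_ ?_).2 hbtw)
    all_goals
      simp only [sameCycle_iff_mk_eq] at *
      grind
  have hfixed : τ b = b → w = b := fun hfix => (hw.eq_of_left hfix).symm
  simp only [sbtw_iff_lt] at hbtw ⊢
  omega

theorem AnnNC.sameCycle_of_crosses (h : AnnNC p q τ) {u v z z' : Fin (p + q)} (huz : u < z)
    (hzv : z < v) (hz' : z' < u ∨ v < z') (huv : τ.SameCycle u v) (hxz : τ.SameCycle x z)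
    (hxz' : τ.SameCycle x z') : τ.SameCycle u x := by
  by_contra hux
  have hxy' : τ.SameCycle x y := hxy ▸ sameCycle_iterate τ x 1
  have hne : ∀ w, τ.SameCycle u w → w ≠ x ∧ w ≠ y := by
    simp only [sameCycle_iff_mk_eq] at *
    grind
  have hu' := hne u .rfl
  have hv' := hne v huv
  rcases lt_or_ge (v : ℕ) p with hv | hv
  · refine h.2.1 (AC1_iff.2 ⟨u, z, v, x, .inl ?_, .inl ⟨huz, hzv⟩, .inl ⟨by omega, by omega⟩, huv,
      hxz.symm, fun huz => hux (huz.trans hxz.symm)⟩)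
    simp only [Set.insert_subset_iff, Set.singleton_subset_iff, mem_extSet]
    omega
  rcases le_or_gt p u with hu | hu
  · refine h.2.1 (AC1_iff.2 ⟨y, u, z, v, .inr ?_, .inl ⟨by omega, huz⟩, .inl ⟨by omega, hzv⟩,
      hxy'.symm.trans hxz, huv, fun hyu => hux (hyu.symm.trans hxy'.symm)⟩)
    simp only [Set.insert_subset_iff, Set.singleton_subset_iff, mem_intSet]
    omega
  · refine h.2.2.1 (AC2_of_sbtw (w := z') hu hv huv hxz' (fun h => hux h.symm) ?_)
    rw [hxy, sbtw_iff_lt]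
    grind [lamLabel]

theorem AnnNC.discNC_of_apply_eq (h : AnnNC p q τ) : DiscNC τ := by
  refine ⟨discStandardRel_iff.2 (isStandardOn_univ.2 fun b => ?_), ?_⟩
  · by_cases hb : τ.SameCycle b x
    · exact h.1.isCyclicNext_of_sameCycle hx hy hxy hb.symm
    · exact h.isCyclicNext_of_not_sameCycle hx hy hxy hb
  rintro ⟨a, b, c, d, hab, hbc, hcd, hac, hbd, hab'⟩
  have hax : ¬ τ.SameCycle a x := fun hax =>
    hab' (hax.trans (h.sameCycle_of_crosses hx hy hxy hbc hcd (.inl hab) hbd (hax.symm.trans hac)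
      hax.symm).symm)
  have hbx : ¬ τ.SameCycle b x := fun hbx =>
    hax (h.sameCycle_of_crosses hx hy hxy hab hbc (.inr hcd) hac hbx.symm (hbx.symm.trans hbd))
  have hxy' : τ.SameCycle x y := hxy ▸ sameCycle_iterate τ x 1
  have hne : ∀ u, τ.SameCycle a u ∨ τ.SameCycle b u → u ≠ x ∧ u ≠ y := by
    simp only [sameCycle_iff_mk_eq] at *
    grind
  have ha' := hne a (.inl .rfl)
  have hc' := hne c (.inl hac)
  refine h.2.2.2 (AC3_iff.2 ⟨a, b, c, d, x, y, mem_extSet.2 (by omega), hy.ge,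
    (sbtw_lamLabel_iff_of_adjacent hx hy ha' (hne b (.inr .rfl)) hc').2 (.inl ⟨hab, hbc⟩),
    (sbtw_lamLabel_iff_of_adjacent hx hy ha' hc' (hne d (.inr hbd))).2
      (.inl ⟨hab.trans hbc, hcd⟩), hxy', hac, hbd, hab', hax, hbx⟩)

end Adjacent

theorem AnnNC.exists_discNC_conj (h : AnnNC p q τ) :
    ∃ i j : ℕ, ∃ σ, DiscNC σ ∧
      gammaExt p q ^ i * (gammaInt p q ^ j * σ * (gammaInt p q ^ j)⁻¹) * (gammaExt p q ^ i)⁻¹ =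
        τ := by
  by_cases hτ : ∀ u ∈ extSet p q, τ u ∈ extSet p q
  · exact ⟨0, 0, τ, h.discNC_of_mapsTo hτ, by simp⟩
  push Not at hτ
  obtain ⟨e, he, hτe⟩ := hτ
  rw [notMem_extSet] at hτe
  have hep := mem_extSet.1 he
  have hpe := mem_intSet.1 hτe
  let x : Fin (p + q) := ⟨p - 1, by omega⟩
  let y : Fin (p + q) := ⟨p, by omega⟩
  have hx : (x : ℕ) + 1 = p := Nat.sub_add_cancel (by omega)
  obtain ⟨i, j, hgx, hgy⟩ :=
    exists_rotation_apply_eq (x := x) (y := y) (mem_extSet.2 (by omega)) he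
      (mem_intSet.2 le_rfl) hτe
  set g := gammaExt p q ^ i * gammaInt p q ^ j with hg
  have hg_mem : g ∈ annSymmetries p q :=
    mul_mem (pow_mem (gammaExt_mem_annSymmetries p q) i)
      (pow_mem (gammaInt_mem_annSymmetries p q) j)
  have hxy : (g⁻¹ * τ * g⁻¹⁻¹) x = y := by
    rw [inv_inv, Perm.mul_apply, Perm.mul_apply, hgx, ← hgy, Perm.inv_def, symm_apply_apply]
  exact ⟨i, j, g⁻¹ * τ * g⁻¹⁻¹, (h.conj (inv_mem hg_mem)).discNC_of_apply_eq hx rfl hxy,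
    by rw [hg]; group⟩

end Converse

/-- Theorem 5.1: `S_ann-nc(p,q)` is the smallest subset of `S([p+q])` containing
`S_disc-nc(p+q)` and invariant under conjugation with `γ_ext` and with `γ_int`. -/
theorem stmt_11 (p q : ℕ) (hp : 0 < p) (hq : 0 < q) :
    {τ : Equiv.Perm (Fin (p + q)) | AnnNC p q τ} =
      ⋂₀ {S : Set (Equiv.Perm (Fin (p + q))) |
            {τ : Equiv.Perm (Fin (p + q)) | DiscNC τ} ⊆ S ∧
            (∀ τ ∈ S, gammaExt p q * τ * (gammaExt p q)⁻¹ ∈ S) ∧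
            (∀ τ ∈ S, gammaInt p q * τ * (gammaInt p q)⁻¹ ∈ S)} := by
  refine Set.Subset.antisymm (Set.subset_sInter fun S ⟨hdisc, hext, hint⟩ τ hτ => ?_) ?_
  · obtain ⟨i, j, σ, hσ, rfl⟩ := AnnNC.exists_discNC_conj hτ
    exact conj_pow_mem hext i (conj_pow_mem hint j (hdisc hσ))
  · exact Set.sInter_subset_of_mem ⟨fun _ => DiscNC.annNC,
      fun _ => AnnNC.conj (gammaExt_mem_annSymmetries p q),
      fun _ => AnnNC.conj (gammaInt_mem_annSymmetries p q)⟩
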